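/- For every positive integer n there exists a constant α_n > 0, depending only on n, with the following property: for every r > 0 and every family of points (p_j)_{j ∈ ℤⁿ} with p_j ∈ B((4r j₁, …, 4r j_n), r) for each j = (j₁,…,j_n) ∈ ℤⁿ, there exists a smooth diffeomorphism ψ from ℝⁿ \ {p_j : j ∈ ℤⁿ} onto ℝⁿ \ 4rℤⁿ such that ‖v‖² ≤ α_n · ‖Dψ_x(v)‖² for every x ∈ ℝⁿ \ {p_j : j ∈ ℤⁿ} and every v ∈ ℝⁿ, where Dψ_x denotes the derivative of ψ at x (i.e. the flat metric is bounded above by α_n times the pullback under ψ of the flat metric). -/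

import Mathlib

open Set Metric

noncomputable section

abbrev Euc (n : ℕ) := EuclideanSpace ℝ (Fin n)

/-- The rescaled lattice `4rℤⁿ ⊆ ℝⁿ`. -/
def scaledLattice (n : ℕ) (r : ℝ) : Set (Euc n) :=
  {x : Euc n | ∃ j : Fin n → ℤ, x = fun k => 4 * r * (j k : ℝ)}

/-!
Push each lattice point `c i` onto `p i` by a smooth cutoff of the translation by `p i - c i`,
supported in a ball around `c i`. These balls are disjoint and their radius exceeds the
displacements, so the cutoffs can be chosen flat enough for every single displacement to be
`K`-Lipschitz with `K < 1`. Near each point at most one of them is nonzero, so a derivative estimate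
makes their sum `F` `K`-Lipschitz as well. Hence `id + F` is a diffeomorphism with Lipschitz
constant at most `2`, and the derivative of its inverse shrinks no vector by more than a factor
of `2`.
-/

open MeasureTheory
open scoped ContDiff Manifold NNReal Topology

-- The transition is the primitive of a normalised bump supported inside `(0, ρ)`, whose height can
-- be brought arbitrarily close to `1 / ρ`.
theorem exists_contDiff_lipschitz_transition {σ ρ : ℝ≥0} (hσ : 0 < σ) (hσρ : σ < ρ) :
    ∃ χ : ℝ → ℝ, ContDiff ℝ ∞ χ ∧ LipschitzWith σ⁻¹ χ ∧ χ =ᶠ[𝓝 0] 1 ∧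
      ∀ t : ℝ, ρ ≤ t → χ t = 0 := by
  have coe_lt_coe : (σ : ℝ) < ρ := hσρ
  let b : ContDiffBump (ρ / 2 : ℝ) := ⟨σ / 2, (σ + ρ) / 4, half_pos (NNReal.coe_pos.2 hσ),
    by linarith⟩
  have b_continuous : Continuous (b.normed volume) := b.continuous_normed
  have support_b : Function.support (b.normed volume) = ball (ρ / 2 : ℝ) ((σ + ρ) / 4) :=
    b.support_normed_eq
  have b_le (t : ℝ) : b.normed volume t ≤ (σ : ℝ)⁻¹ := by
    have volume_closedBall : volume.real (closedBall (ρ / 2 : ℝ) b.rIn) = σ := by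
      rw [Real.volume_real_closedBall b.rIn_pos.le]
      exact mul_div_cancel₀ _ two_ne_zero
    simpa only [volume_closedBall, one_div] using b.normed_le_div_measure_closedBall_rIn volume t
  have hasDerivAt_χ (t : ℝ) :
      HasDerivAt (fun t ↦ ∫ s in t..ρ, b.normed volume s) (-b.normed volume t) t :=
    intervalIntegral.integral_hasDerivAt_left (b_continuous.intervalIntegrable _ _)
      b_continuous.aestronglyMeasurable.stronglyMeasurableAtFilter b_continuous.continuousAt
  refine ⟨fun t ↦ ∫ s in t..ρ, b.normed volume s, ?_, ?_, ?_, fun t ht ↦ ?_⟩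
  · rw [contDiff_infty_iff_deriv, funext fun t ↦ (hasDerivAt_χ t).deriv]
    exact ⟨fun t ↦ (hasDerivAt_χ t).differentiableAt, b.contDiff_normed.neg⟩
  · refine lipschitzWith_of_nnnorm_deriv_le (fun t ↦ (hasDerivAt_χ t).differentiableAt) fun t ↦ ?_
    rw [(hasDerivAt_χ t).deriv, nnnorm_neg, ← NNReal.coe_le_coe, coe_nnnorm,
      Real.norm_of_nonneg (b.nonneg_normed t)]
    exact b_le t
  · filter_upwards [Iio_mem_nhds (div_pos (sub_pos.2 coe_lt_coe) four_pos)] with t ht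
    rw [mem_Iio] at ht
    refine (intervalIntegral.integral_eq_integral_of_support_subset ?_).trans b.integral_normed
    rw [support_b, Real.ball_eq_Ioo]
    exact fun s hs ↦ ⟨by linarith [hs.1], by linarith [hs.2]⟩
  · refine (intervalIntegral.integral_congr (g := fun _ ↦ (0 : ℝ)) fun s hs ↦ ?_).trans
      intervalIntegral.integral_zero
    rw [uIcc_of_ge ht] at hs
    refine Function.notMem_support.1 fun h ↦ ?_
    rw [support_b, Real.ball_eq_Ioo] at h
    linarith [hs.1, h.2]

theorem exists_contDiff_lipschitz_bump (E : Type*) [NormedAddCommGroup E] [InnerProductSpace ℝ E]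
    {σ ρ : ℝ≥0} (hσ : 0 < σ) (hσρ : σ < ρ) :
    ∃ f : E → ℝ, ContDiff ℝ ∞ f ∧ LipschitzWith σ⁻¹ f ∧ f 0 = 1 ∧ ∀ x, ρ ≤ ‖x‖ → f x = 0 := by
  obtain ⟨χ, χ_contDiff, χ_lipschitz, χ_zero, χ_eq_zero⟩ :=
    exists_contDiff_lipschitz_transition hσ hσρ
  refine ⟨fun x ↦ χ ‖x‖, contDiff_iff_contDiffAt.2 fun x ↦ ?_, ?_, ?_, fun x ↦ χ_eq_zero ‖x‖⟩
  · rcases eq_or_ne x 0 with rfl | hx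
    · have norm_tendsto : Filter.Tendsto norm (𝓝 (0 : E)) (𝓝 0) := by
        simpa only [norm_zero] using continuous_norm.tendsto (0 : E)
      exact (contDiffAt_const (c := (1 : ℝ))).congr_of_eventuallyEq
        (norm_tendsto.eventually χ_zero)
    · exact χ_contDiff.contDiffAt.comp x (contDiffAt_norm ℝ hx)
  · exact (χ_lipschitz.comp lipschitzWith_one_norm).weaken (mul_one _).le
  · simpa only [norm_zero, Pi.one_apply] using χ_zero.eq_of_nhds

section SeparatedSupports

variable {ι X E F : Type*} {ρ R : ℝ}

theorem finsum_eq_of_mem_ball [PseudoMetricSpace X] [AddCommMonoid F] {c : ι → X} {f : ι → X → F}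
    (hρR : ρ ≤ R) (hc : Pairwise fun i j ↦ 2 * R ≤ dist (c i) (c j))
    (hf : ∀ i x, ρ ≤ dist x (c i) → f i x = 0) {i : ι} {x : X} (hx : x ∈ ball (c i) R) :
    ∑ᶠ j, f j x = f i x := by
  refine finsum_eq_single _ i fun j hj ↦ hf j x ?_
  linarith [mem_ball.1 hx, hc hj, dist_triangle_left (c j) (c i) x]

theorem finsum_eventuallyEq_or_eventuallyEq_zero [PseudoMetricSpace X] [AddCommMonoid F]
    {c : ι → X} {f : ι → X → F} (hρR : ρ < R)
    (hc : Pairwise fun i j ↦ 2 * R ≤ dist (c i) (c j))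
    (hf : ∀ i x, ρ ≤ dist x (c i) → f i x = 0) (x : X) :
    (∃ i, (fun y ↦ ∑ᶠ j, f j y) =ᶠ[𝓝 x] f i) ∨ (fun y ↦ ∑ᶠ j, f j y) =ᶠ[𝓝 x] 0 := by
  by_cases hx : ∃ i, x ∈ ball (c i) R
  · obtain ⟨i, hi⟩ := hx
    left
    use i
    filter_upwards [isOpen_ball.mem_nhds hi] with y hy
    exact finsum_eq_of_mem_ball hρR.le hc hf hy
  · right
    filter_upwards [ball_mem_nhds x (sub_pos.2 hρR)] with y hy
    refine finsum_eq_zero_of_forall_eq_zero fun i ↦ hf i y ?_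
    have hxi : R ≤ dist x (c i) := not_lt.1 fun h ↦ hx ⟨i, h⟩
    linarith [mem_ball.1 hy, dist_triangle_left x (c i) y]

variable [NormedAddCommGroup E] [NormedSpace ℝ E] [NormedAddCommGroup F] [NormedSpace ℝ F]
  {c : ι → E} {f : ι → E → F}

theorem contDiff_finsum_of_separated {n : WithTop ℕ∞} (hρR : ρ < R)
    (hc : Pairwise fun i j ↦ 2 * R ≤ dist (c i) (c j))
    (hf : ∀ i x, ρ ≤ dist x (c i) → f i x = 0) (hf_contDiff : ∀ i, ContDiff ℝ n (f i)) :
    ContDiff ℝ n fun x ↦ ∑ᶠ i, f i x := by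
  refine contDiff_iff_contDiffAt.2 fun x ↦ ?_
  obtain ⟨i, h⟩ | h := finsum_eventuallyEq_or_eventuallyEq_zero hρR hc hf x
  · exact (hf_contDiff i).contDiffAt.congr_of_eventuallyEq h
  · exact contDiffAt_const.congr_of_eventuallyEq h

theorem lipschitzWith_finsum_of_separated {K : ℝ≥0} (hρR : ρ < R)
    (hc : Pairwise fun i j ↦ 2 * R ≤ dist (c i) (c j))
    (hf : ∀ i x, ρ ≤ dist x (c i) → f i x = 0) (hf_diff : ∀ i, Differentiable ℝ (f i))
    (hf_lipschitz : ∀ i, LipschitzWith K (f i)) :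
    LipschitzWith K fun x ↦ ∑ᶠ i, f i x := by
  refine lipschitzWith_of_nnnorm_fderiv_le (𝕜 := ℝ) (fun x ↦ ?_) fun x ↦ ?_ <;>
    obtain ⟨i, h⟩ | h := finsum_eventuallyEq_or_eventuallyEq_zero hρR hc hf x
  · exact (hf_diff i x).congr_of_eventuallyEq h
  · exact (differentiableAt_const 0).congr_of_eventuallyEq h
  · rw [h.fderiv_eq]
    exact norm_fderiv_le_of_lipschitz ℝ (hf_lipschitz i)
  · simp only [h.fderiv_eq, fderiv_zero, Pi.zero_apply, nnnorm_zero, zero_le]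

end SeparatedSupports

section Perturbation

variable {E : Type*} [NormedAddCommGroup E] [NormedSpace ℝ E]

theorem exists_homeomorph_id_add [CompleteSpace E] {F : E → E} {K : ℝ≥0} (hK : K < 1)
    (hF : LipschitzWith K F) : ∃ e : E ≃ₜ E, ∀ x, e x = x + F x := by
  have approx : ApproximatesLinearOn (fun x ↦ x + F x)
      (ContinuousLinearEquiv.refl ℝ E : E →L[ℝ] E) univ K := fun x _ y _ ↦ by
    simpa [add_sub_add_comm] using hF.norm_sub_le x y
  refine ⟨approx.toHomeomorph _ ?_, fun _ ↦ rfl⟩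
  rcases subsingleton_or_nontrivial E with hE | hE
  · exact Or.inl hE
  · right
    simpa using hK

theorem exists_continuousLinearEquiv_eq_id_add [CompleteSpace E] {A : E →L[ℝ] E} (hA : ‖A‖ < 1) :
    ∃ B : E ≃L[ℝ] E, (B : E →L[ℝ] E) = ContinuousLinearMap.id ℝ E + A := by
  refine ⟨ContinuousLinearEquiv.unitsEquiv ℝ E (Units.oneSub (-A) (by rwa [norm_neg])), ?_⟩
  ext v
  simp

theorem exists_diffeomorph_id_add [CompleteSpace E] {F : E → E} {K : ℝ≥0} (hK : K < 1)
    (hF : LipschitzWith K F) (hF_contDiff : ContDiff ℝ ∞ F) :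
    ∃ e : E ≃ₘ[ℝ] E, ∀ x, e x = x + F x := by
  obtain ⟨e, he⟩ := exists_homeomorph_id_add hK hF
  have e_contDiff : ContDiff ℝ ∞ e := by
    rw [funext he]
    exact contDiff_id.add hF_contDiff
  have norm_fderiv_lt (x : E) : ‖fderiv ℝ F x‖ < 1 :=
    (norm_fderiv_le_of_lipschitz ℝ hF).trans_lt hK
  choose B hB using fun x ↦ exists_continuousLinearEquiv_eq_id_add (norm_fderiv_lt x)
  have hasFDerivAt_e (x : E) : HasFDerivAt e (B x : E →L[ℝ] E) x := by
    rw [funext he, hB]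
    exact (hasFDerivAt_id x).add (hF_contDiff.differentiable (by simp) x).hasFDerivAt
  have e_symm_contDiff : ContDiff ℝ ∞ e.symm := e.contDiff_symm hasFDerivAt_e e_contDiff
  exact ⟨⟨e.toEquiv, e_contDiff.contMDiff, e_symm_contDiff.contMDiff⟩, he⟩

end Perturbation

theorem norm_le_mul_norm_fderiv_of_antilipschitzWith {𝕜 E F : Type*} [NontriviallyNormedField 𝕜]
    [NormedAddCommGroup E] [NormedSpace 𝕜 E] [NormedAddCommGroup F] [NormedSpace 𝕜 F]
    {f : E → F} {f' : E →L[𝕜] F} {x : E} {K : ℝ≥0} (hf : AntilipschitzWith K f)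
    (hf' : HasFDerivAt f f' x) (v : E) : ‖v‖ ≤ K * ‖f' v‖ := by
  refine ge_of_tendsto ((hf'.hasLineDerivAt v).tendsto_slope_zero.norm.const_mul (K : ℝ)) ?_
  filter_upwards [self_mem_nhdsWithin] with t (ht : t ≠ 0)
  have h : ‖t‖ * ‖v‖ ≤ K * ‖f (x + t • v) - f x‖ := by
    simpa [dist_eq_norm, norm_smul] using hf.le_mul_dist (x + t • v) x
  rw [norm_smul, norm_inv, mul_left_comm]
  exact (le_inv_mul_iff₀ (norm_pos_iff.2 ht)).2 h

section MovingPoints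

variable {E ι : Type*} [NormedAddCommGroup E] [InnerProductSpace ℝ E] {δ R : ℝ≥0} {c p : ι → E}

theorem exists_contDiff_lipschitz_displacement (hδR : δ < R)
    (hc : Pairwise fun i j ↦ 2 * R ≤ dist (c i) (c j)) (hp : ∀ i, dist (p i) (c i) ≤ δ) :
    ∃ (F : E → E) (K : ℝ≥0), K < 1 ∧ LipschitzWith K F ∧ ContDiff ℝ ∞ F ∧
      ∀ i, F (c i) = p i - c i := by
  obtain ⟨σ, hδσ, hσR⟩ := exists_between hδR
  obtain ⟨ρ, hσρ, hρR⟩ := exists_between hσR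
  have hσ : 0 < σ := hδσ.pos
  obtain ⟨f, f_contDiff, f_lipschitz, f_zero, f_eq_zero⟩ :=
    exists_contDiff_lipschitz_bump E hσ hσρ
  let g (i : ι) (x : E) : E := f (x - c i) • (p i - c i)
  have g_contDiff (i : ι) : ContDiff ℝ ∞ (g i) :=
    (f_contDiff.comp (contDiff_id.sub contDiff_const)).smul contDiff_const
  have g_lipschitz (i : ι) : LipschitzWith (σ⁻¹ * δ) (g i) := by
    refine LipschitzWith.of_dist_le_mul fun x y ↦ ?_
    calc dist (g i x) (g i y)
        = dist (f (x - c i)) (f (y - c i)) * dist (p i) (c i) := by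
          simp only [g, dist_eq_norm, ← sub_smul, norm_smul]
      _ ≤ σ⁻¹ * dist x y * δ := by
          gcongr
          · simpa only [dist_sub_right, NNReal.coe_inv] using
              f_lipschitz.dist_le_mul (x - c i) (y - c i)
          · exact hp i
      _ = (σ⁻¹ * δ : ℝ≥0) * dist x y := by
          push_cast
          ring
  have g_eq_zero (i : ι) (x : E) (hx : ρ ≤ dist x (c i)) : g i x = 0 := by
    simp only [g, f_eq_zero _ (hx.trans_eq (dist_eq_norm x (c i))), zero_smul]
  refine ⟨fun x ↦ ∑ᶠ i, g i x, σ⁻¹ * δ, (inv_mul_lt_one₀ hσ).2 hδσ,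
    lipschitzWith_finsum_of_separated hρR hc g_eq_zero
      (fun i ↦ (g_contDiff i).differentiable (by simp)) g_lipschitz,
    contDiff_finsum_of_separated hρR hc g_eq_zero g_contDiff, fun i ↦ ?_⟩
  have hci : c i ∈ ball (c i) R := mem_ball_self (hδσ.trans hσR).pos
  simpa only [g, sub_self, f_zero, one_smul] using
    finsum_eq_of_mem_ball (NNReal.coe_le_coe.2 hρR.le) hc g_eq_zero hci

theorem exists_lipschitz_diffeomorph_apply_eq [CompleteSpace E] (hδR : δ < R)
    (hc : Pairwise fun i j ↦ 2 * R ≤ dist (c i) (c j)) (hp : ∀ i, dist (p i) (c i) ≤ δ) :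
    ∃ e : E ≃ₘ[ℝ] E, LipschitzWith 2 e ∧ ∀ i, e (c i) = p i := by
  obtain ⟨F, K, hK, F_lipschitz, F_contDiff, hF⟩ :=
    exists_contDiff_lipschitz_displacement hδR hc hp
  obtain ⟨e, he⟩ := exists_diffeomorph_id_add hK F_lipschitz F_contDiff
  refine ⟨e, ?_, fun i ↦ by rw [he, hF, add_sub_cancel]⟩
  rw [funext he]
  exact (LipschitzWith.id.add F_lipschitz).weaken
    ((add_le_add_right hK.le 1).trans_eq one_add_one_eq_two)

end MovingPoints

theorem exists_diffeo_to_lattice_complement_general {E ι : Type*} [NormedAddCommGroup E]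
    [InnerProductSpace ℝ E] [CompleteSpace E] {δ R : ℝ} {c p : ι → E} (hδ : 0 ≤ δ) (hδR : δ < R)
    (hc : Pairwise fun i j ↦ 2 * R ≤ dist (c i) (c j)) (hp : ∀ i, dist (p i) (c i) ≤ δ) :
    ∃ ψ φ : E → E,
      ContDiffOn ℝ ∞ ψ (range p)ᶜ ∧ InjOn ψ (range p)ᶜ ∧ ψ '' (range p)ᶜ = (range c)ᶜ ∧
      ContDiffOn ℝ ∞ φ (range c)ᶜ ∧ (∀ x ∈ (range p)ᶜ, φ (ψ x) = x) ∧
      (∀ y ∈ (range c)ᶜ, ψ (φ y) = y) ∧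
      ∀ x ∈ (range p)ᶜ, ∀ v, ‖v‖ ^ 2 ≤ 4 * ‖fderiv ℝ ψ x v‖ ^ 2 := by
  lift δ to ℝ≥0 using hδ
  lift R to ℝ≥0 using δ.2.trans hδR.le
  obtain ⟨e, e_lipschitz, he⟩ := exists_lipschitz_diffeomorph_apply_eq hδR hc hp
  refine ⟨e.symm, e, e.symm.contDiff.contDiffOn, e.symm.injective.injOn, ?_,
    e.contDiff.contDiffOn, fun x _ ↦ e.apply_symm_apply x, fun y _ ↦ e.symm_apply_apply y,
    fun x _ v ↦ ?_⟩
  · have e_symm_comp : e.symm.toEquiv ∘ p = c :=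
      funext fun i ↦ e.toEquiv.symm_apply_eq.2 (he i).symm
    exact (image_compl_eq e.symm.bijective).trans (by rw [← range_comp, e_symm_comp])
  · have hv : ‖v‖ ≤ 2 * ‖fderiv ℝ e.symm x v‖ :=
      norm_le_mul_norm_fderiv_of_antilipschitzWith (e_lipschitz.to_rightInverse e.apply_symm_apply)
        (e.symm.contDiff.differentiable (by simp) x).hasFDerivAt v
    calc ‖v‖ ^ 2 ≤ (2 * ‖fderiv ℝ e.symm x v‖) ^ 2 := by gcongr
      _ = 4 * ‖fderiv ℝ e.symm x v‖ ^ 2 := by ring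

/-- The point of the rescaled lattice `4rℤⁿ` with index `j ∈ ℤⁿ`. -/
def scaledLatticePoint (n : ℕ) (r : ℝ) (j : Fin n → ℤ) : Euc n :=
  WithLp.toLp 2 fun k ↦ 4 * r * (j k : ℝ)

theorem range_scaledLatticePoint (n : ℕ) (r : ℝ) :
    range (scaledLatticePoint n r) = scaledLattice n r := by
  ext x
  exact exists_congr fun j ↦ ⟨fun h ↦ h ▸ rfl, fun h ↦ PiLp.ext fun k ↦ (congrFun h k).symm⟩

theorem pairwise_le_dist_scaledLatticePoint (n : ℕ) (r : ℝ) :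
    Pairwise fun i j ↦ 4 * |r| ≤ dist (scaledLatticePoint n r i) (scaledLatticePoint n r j) := by
  intro i j hij
  obtain ⟨k, hk⟩ := Function.ne_iff.1 hij
  have one_le : (1 : ℝ) ≤ |(i k : ℝ) - j k| := by
    exact_mod_cast Int.one_le_abs (sub_ne_zero.2 hk)
  calc 4 * |r| ≤ 4 * |r| * |(i k : ℝ) - j k| := le_mul_of_one_le_right (by positivity) one_le
    _ = ‖(scaledLatticePoint n r i - scaledLatticePoint n r j) k‖ := by
      rw [PiLp.sub_apply, scaledLatticePoint, scaledLatticePoint, ← mul_sub, Real.norm_eq_abs,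
        abs_mul, abs_mul, abs_of_pos (four_pos : (0 : ℝ) < 4)]
    _ ≤ ‖scaledLatticePoint n r i - scaledLatticePoint n r j‖ := PiLp.norm_apply_le _ k
    _ = dist (scaledLatticePoint n r i) (scaledLatticePoint n r j) := (dist_eq_norm _ _).symm

/-- For every positive integer `n` there is `α_n > 0` such that: for every `r > 0` and every
choice of points `p_j ∈ B((4rj₁, …, 4rj_n), r)` (`j ∈ ℤⁿ`), there is a smooth diffeomorphism
`ψ : ℝⁿ ∖ {p_j} → ℝⁿ ∖ 4rℤⁿ` with `‖v‖² ≤ α_n ‖Dψ_x(v)‖²` for all `x` and `v`,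
i.e. the flat metric is bounded by `α_n` times the pullback of the flat metric under `ψ`. -/
theorem exists_diffeo_to_lattice_complement (n : ℕ) (hn : 0 < n) :
    ∃ α : ℝ, 0 < α ∧
      ∀ r : ℝ, 0 < r →
      ∀ p : (Fin n → ℤ) → Euc n,
        (∀ j : Fin n → ℤ, p j ∈ ball (show Euc n from WithLp.toLp 2 fun k => 4 * r * (j k : ℝ)) r) →
        ∃ ψ φ : Euc n → Euc n,
          ContDiffOn ℝ (⊤ : ℕ∞) ψ (range p)ᶜ ∧
          InjOn ψ (range p)ᶜ ∧
          ψ '' (range p)ᶜ = (scaledLattice n r)ᶜ ∧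
          ContDiffOn ℝ (⊤ : ℕ∞) φ (scaledLattice n r)ᶜ ∧
          (∀ x ∈ (range p)ᶜ, φ (ψ x) = x) ∧
          (∀ y ∈ (scaledLattice n r)ᶜ, ψ (φ y) = y) ∧
          ∀ x ∈ (range p)ᶜ, ∀ v : Euc n, ‖v‖ ^ 2 ≤ α * ‖fderiv ℝ ψ x v‖ ^ 2 := by
  refine ⟨4, four_pos, fun r hr p hp ↦ ?_⟩
  rw [← range_scaledLatticePoint]
  exact exists_diffeo_to_lattice_complement_general hr.le (lt_two_mul_self hr)
    ((pairwise_le_dist_scaledLatticePoint n r).mono fun _ _ h ↦ by linarith [le_abs_self r])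
    fun j ↦ (mem_ball.1 (hp j)).le
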